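/- The only connected complete isoparametric hypersurfaces of ℝ³ (surfaces that locally arise as regular level sets of a function λ with |∇λ| and Δλ constant on level sets, equivalently surfaces with constant principal curvatures) are planes, round spheres, and round circular cylinders. -/

import Mathlib

open scoped RealInnerProductSpace

/-!
Suppose first that the principal curvatures `k₁ ≠ k₂` are distinct, and let `Q` be the orthogonal
projection onto the principal space of `k₁`. The trilinear form `⟪dQ u a, b⟫` of tangent vectors is
symmetric in `u` and `a` by the Codazzi equation and in `a` and `b` since `Q` is self-adjoint;
together with `dQ = dQ ∘ Q + Q ∘ dQ` this forces it to vanish. So `dQ` is determined by the shape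
operator, and the symmetry of the second derivatives of `⟪Q e, w⟫` for principal directions
`e` and `w` is the Gauss equation `k₁ * k₂ = 0`. If `k₁ = 0`, then `dQ = 0`, so that `Q` is the
projection onto a fixed subspace `K`, and the differential of the normal `ν` is `k₂` times the
projection onto `Kᗮ`. In the umbilic case `k₁ = k₂ = k` the same holds with `K = ⊥`.

Hence `ν` is constant, or the focal map `p ↦ Kᗮ.starProjection p - k⁻¹ • ν p` is, and the
hypersurface lies in a hyperplane or in a tube around an affine subspace of direction `K`. A regular
level set contained in a connected regular level set of another function is relatively open and
closed in it, hence equal to it.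
-/

open Filter Topology

section LevelSet

variable {E F : Type*} [NormedAddCommGroup E] [NormedSpace ℝ E]
  [NormedAddCommGroup F] [NormedSpace ℝ F] {f : E → ℝ} {p : E}

theorem exists_apply_eq_one_of_ne_zero {L : E →L[ℝ] ℝ} (hL : L ≠ 0) : ∃ n, L n = 1 := by
  obtain ⟨v, hv⟩ := DFunLike.ne_iff.1 hL
  exact ⟨(L v)⁻¹ • v, by simpa using inv_mul_cancel₀ hv⟩

theorem hasFDerivWithinAt_levelSet_zero {f' : E →L[ℝ] ℝ} {g : E → F} {g' : E →L[ℝ] F}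
    (hf : HasFDerivAt f f' p) (hf' : f' ≠ 0) (hg : HasFDerivAt g g' p)
    (h : ∀ u, f' u = 0 → g' u = 0) : HasFDerivWithinAt g (0 : E →L[ℝ] F) (f ⁻¹' {f p}) p := by
  obtain ⟨n, hn⟩ := exists_apply_eq_one_of_ne_zero hf'
  have hg' : g' = f'.smulRight (g' n) := by
    ext u
    have hu := h (u - f' u • n) (by simp [hn])
    rwa [map_sub, map_smul, sub_eq_zero] at hu
  have hsub : HasFDerivAt (fun x ↦ g x - (f x - f p) • g' n) (0 : E →L[ℝ] F) p := by
    convert! hg.sub ((hf.sub_const (f p)).smul_const (g' n)) using 1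
    rw [← hg', sub_self]
  refine hsub.hasFDerivWithinAt.congr (fun x hx ↦ ?_) (by simp)
  simp [show f x = f p from hx]

variable [CompleteSpace E]

theorem apply_eq_zero_of_const_on_levelSet {f' : E →L[ℝ] ℝ} {g : E → F} {g' : E →L[ℝ] F}
    (hf : HasStrictFDerivAt f f' p) (hf' : f' ≠ 0) (hg : HasStrictFDerivAt g g' p)
    (h : ∀ x, f x = f p → g x = g p) {u : E} (hu : f' u = 0) : g' u = 0 := by
  refine SeparatingDual.eq_zero_of_forall_dual_eq_zero (R := ℝ) fun φ ↦ ?_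
  have hextr : IsLocalExtrOn (φ ∘ g) {x | f x = f p} p :=
    .inl (eventually_mem_nhdsWithin.mono fun x hx ↦ by simp [h x hx])
  obtain ⟨a, b, hab, hab'⟩ := hextr.exists_multipliers_of_hasStrictFDerivAt_1d hf
    (φ.hasStrictFDerivAt.comp p hg)
  have hb : b ≠ 0 := by
    rintro rfl
    exact hab (by simpa [hf'] using hab')
  simpa [hu, hb] using congr($hab' u)

theorem exists_straightening_levelSet (hf : ContDiffAt ℝ 1 f p) (n : E) :
    ∃ e : OpenPartialHomeomorph E E, p ∈ e.source ∧
      (∀ x, e x = x + (f x - fderiv ℝ f p x) • n) ∧ ContDiffAt ℝ 1 e.symm (e p) := by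
  have hfp : HasFDerivAt f (fderiv ℝ f p) p := (hf.differentiableAt one_ne_zero).hasFDerivAt
  let Φ : E → E := fun x ↦ x + (f x - fderiv ℝ f p x) • n
  have hΦ : ContDiffAt ℝ 1 Φ p := by fun_prop
  have hΦ' : HasFDerivAt Φ (ContinuousLinearEquiv.refl ℝ E : E →L[ℝ] E) p := by
    convert! (hasFDerivAt_id p).add ((hfp.sub (fderiv ℝ f p).hasFDerivAt).smul_const n) using 1
    ext x
    simp
  exact ⟨hΦ.toOpenPartialHomeomorph Φ hΦ' one_ne_zero,
    hΦ.mem_toOpenPartialHomeomorph_source hΦ' one_ne_zero, fun _ ↦ rfl,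
    hΦ.to_localInverse hΦ' one_ne_zero⟩

theorem eventually_eq_of_hasFDerivWithinAt_levelSet_zero {g : E → F} (hf : ContDiffAt ℝ 1 f p)
    (hf' : fderiv ℝ f p ≠ 0)
    (hg : ∀ q, f q = f p → HasFDerivWithinAt g (0 : E →L[ℝ] F) (f ⁻¹' {f p}) q) :
    ∀ᶠ x in 𝓝 p, f x = f p → g x = g p := by
  obtain ⟨n, hn⟩ := exists_apply_eq_one_of_ne_zero hf'
  obtain ⟨e, hp, he, hsymm⟩ := exists_straightening_levelSet hf n
  have hfe : ∀ x, fderiv ℝ f p (e x) = f x := fun x ↦ by simp [he, hn]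
  have hdiff : ∀ᶠ y in 𝓝 (e p), DifferentiableAt ℝ e.symm y :=
    (hsymm.eventually (by simp)).mono fun y hy ↦ hy.differentiableAt one_ne_zero
  obtain ⟨ε, hε, hball⟩ := Metric.eventually_nhds_iff_ball.1
    (hdiff.and (e.open_target.mem_nhds (e.map_source hp)))
  set s := Metric.ball (e p) ε ∩ {y | fderiv ℝ f p y = f p}
  have hconvex : Convex ℝ s := (convex_ball _ _).inter
    (convex_hyperplane (fderiv ℝ f p).toLinearMap.isLinear _)
  have hmaps : Set.MapsTo e.symm s (f ⁻¹' {f p}) := fun y hy ↦ by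
    rw [Set.mem_preimage, Set.mem_singleton_iff, ← hfe (e.symm y), e.right_inv (hball y hy.1).2]
    exact hy.2
  have hderiv : ∀ y ∈ s, HasFDerivWithinAt (g ∘ e.symm) (0 : E →L[ℝ] F) s y := fun y hy ↦ by
    simpa using (hg _ (hmaps hy)).comp y (hball y hy.1).1.hasFDerivAt.hasFDerivWithinAt hmaps
  filter_upwards [e.open_source.mem_nhds hp,
    (e.continuousAt hp).eventually (Metric.ball_mem_nhds _ hε)] with x hxs hxε hx
  have hdist := hconvex.norm_image_sub_le_of_norm_hasFDerivWithin_le hderiv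
    (fun _ _ ↦ norm_zero.le) (x := e p) (y := e x) ⟨Metric.mem_ball_self hε, hfe p⟩
    ⟨hxε, (hfe x).trans hx⟩
  simpa [e.left_inv hxs, e.left_inv hp, sub_eq_zero] using hdist

theorem eq_of_hasFDerivWithinAt_levelSet_zero {c : ℝ} {g : E → F} (hf : ContDiff ℝ 1 f)
    (hf' : ∀ p, f p = c → fderiv ℝ f p ≠ 0) (hconn : IsPreconnected (f ⁻¹' {c}))
    (hg : ∀ p, f p = c → HasFDerivWithinAt g (0 : E →L[ℝ] F) (f ⁻¹' {c}) p) {p q : E}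
    (hp : f p = c) (hq : f q = c) : g p = g q := by
  have : PreconnectedSpace (f ⁻¹' {c}) := Subtype.preconnectedSpace hconn
  have hloc : IsLocallyConstant fun x : f ⁻¹' {c} ↦ g x := by
    refine (IsLocallyConstant.iff_eventually_eq _).2 ?_
    rintro ⟨p, rfl⟩
    exact (continuous_subtype_val.continuousAt.eventually
      (eventually_eq_of_hasFDerivWithinAt_levelSet_zero hf.contDiffAt (hf' p rfl) hg)).mono
      fun x hx ↦ hx x.2
  exact hloc.apply_eq_of_preconnectedSpace ⟨p, hp⟩ ⟨q, hq⟩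

theorem fderiv_apply_ne_zero_of_const_on_levelSet {g : E → ℝ} {n : E} (hf : ContDiffAt ℝ 1 f p)
    (hg : ContDiffAt ℝ 1 g p) (hn : fderiv ℝ f p n = 1) (hg' : fderiv ℝ g p ≠ 0)
    (h : ∀ x, f x = f p → g x = g p) : fderiv ℝ g p n ≠ 0 := by
  refine fun hgn ↦ hg' (ContinuousLinearMap.ext fun u ↦ ?_)
  have hf' : fderiv ℝ f p ≠ 0 := fun h0 ↦ by simp [h0] at hn
  have hu := apply_eq_zero_of_const_on_levelSet (hf.hasStrictFDerivAt one_ne_zero) hf'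
    (hg.hasStrictFDerivAt one_ne_zero) h (u := u - fderiv ℝ f p u • n) (by simp [hn])
  simpa [hgn] using hu

theorem exists_tendsto_levelSet_along {n : E} (hf : ContDiffAt ℝ 1 f p)
    (hn : fderiv ℝ f p n = 1) : ∃ s : E → E, Tendsto s (𝓝 p) (𝓝 p) ∧
      ∀ᶠ x in 𝓝 p, f (s x) = f p ∧ ∃ t : ℝ, s x = x + t • n := by
  obtain ⟨e, hp, he, -⟩ := exists_straightening_levelSet hf n
  have hshift : Tendsto (fun x ↦ e x - (f x - f p) • n) (𝓝 p) (𝓝 (e p)) := by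
    have hcont : ContinuousAt (fun x ↦ e x - (f x - f p) • n) p :=
      (e.continuousAt hp).sub ((hf.continuousAt.sub continuousAt_const).smul continuousAt_const)
    simpa using hcont.tendsto
  refine ⟨fun x ↦ e.symm (e x - (f x - f p) • n), ?_, ?_⟩
  · simpa only [Function.comp_def, e.left_inv hp] using
      (e.continuousAt_symm (e.map_source hp)).tendsto.comp hshift
  filter_upwards [hshift.eventually (e.open_target.mem_nhds (e.map_source hp))] with x hx
  set y := e.symm (e x - (f x - f p) • n)
  have hy : e y = e x - (f x - f p) • n := e.right_inv hx
  have hfy : f y = f p := by simpa [he, hn] using congr(fderiv ℝ f p $hy)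
  refine ⟨hfy, fderiv ℝ f p y - fderiv ℝ f p x, ?_⟩
  rw [he, he, hfy] at hy
  linear_combination (norm := module) hy

theorem exists_mem_nhds_injOn_line {n : E} (hf : ContDiffAt ℝ 1 f p)
    (hn : fderiv ℝ f p n ≠ 0) :
    ∃ U ∈ 𝓝 p, ∀ x ∈ U, ∀ t : ℝ, x + t • n ∈ U → f (x + t • n) = f x → x + t • n = x := by
  obtain ⟨e, hp, he, -⟩ := exists_straightening_levelSet hf ((fderiv ℝ f p n)⁻¹ • n)
  refine ⟨e.source, e.open_source.mem_nhds hp, fun x hx t hxt hfx ↦ e.injOn hxt hx ?_⟩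
  have hslope : (t * fderiv ℝ f p n) • (fderiv ℝ f p n)⁻¹ • n = t • n := by
    rw [smul_smul, mul_inv_cancel_right₀ hn]
  rw [he, he, hfx, map_add, map_smul, smul_eq_mul]
  linear_combination (norm := module) -hslope

theorem eventually_levelSet_subset {g : E → ℝ} (hf : ContDiffAt ℝ 1 f p)
    (hg : ContDiffAt ℝ 1 g p) (hf' : fderiv ℝ f p ≠ 0) (hg' : fderiv ℝ g p ≠ 0)
    (h : ∀ x, f x = f p → g x = g p) : ∀ᶠ x in 𝓝 p, g x = g p → f x = f p := by
  obtain ⟨n, hn⟩ := exists_apply_eq_one_of_ne_zero hf'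
  obtain ⟨s, hs, hfs⟩ := exists_tendsto_levelSet_along hf hn
  obtain ⟨U, hU, hinj⟩ := exists_mem_nhds_injOn_line hg
    (fderiv_apply_ne_zero_of_const_on_levelSet hf hg hn hg' h)
  filter_upwards [hfs, hU, hs.eventually hU] with x ⟨hfsx, t, hsx⟩ hxU hsxU hgx
  have hsx_eq : s x = x := by
    rw [hsx]
    exact hinj x hxU t (hsx ▸ hsxU) (hsx ▸ (h _ hfsx).trans hgx.symm)
  rwa [hsx_eq] at hfsx

theorem levelSet_eq_of_subset {c d : ℝ} {g : E → ℝ} (hf : ContDiff ℝ 1 f) (hg : ContDiff ℝ 1 g)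
    (hf' : ∀ p, f p = c → fderiv ℝ f p ≠ 0) (hg' : ∀ p, f p = c → fderiv ℝ g p ≠ 0)
    (hne : (f ⁻¹' {c}).Nonempty) (hconn : IsPreconnected (g ⁻¹' {d}))
    (hsub : f ⁻¹' {c} ⊆ g ⁻¹' {d}) : f ⁻¹' {c} = g ⁻¹' {d} := by
  set V := interior {x | g x = d → f x = c}
  have hV : f ⁻¹' {c} ⊆ V := by
    rintro p rfl
    have hgp : g p = d := hsub rfl
    exact mem_interior_iff_mem_nhds.2 (hgp ▸ eventually_levelSet_subset hf.contDiffAt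
      hg.contDiffAt (hf' p rfl) (hg' p rfl) fun x hx ↦ (hsub hx).trans hgp.symm)
  have hgV : ∀ x ∈ V, g x = d → f x = c := fun x hx ↦ interior_subset hx
  refine hsub.antisymm ?_
  rcases isPreconnected_iff_subset_of_disjoint.1 hconn V {x | f x ≠ c} isOpen_interior
    (isOpen_ne_fun hf.continuous continuous_const)
    (fun x _ ↦ (em (f x = c)).imp (@hV x) id)
    (by ext x; simpa using fun hgx hxV ↦ hgV x hxV hgx) with h | h
  · exact fun x hx ↦ hgV x (h hx) hx
  · obtain ⟨p, hp⟩ := hne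
    exact absurd hp (h (hsub hp))

end LevelSet

section Integrability

variable {E F : Type*} [NormedAddCommGroup E] [NormedSpace ℝ E] [CompleteSpace E]
  [NormedAddCommGroup F] [NormedSpace ℝ F] {f : E → ℝ} {G : E → F} {B : E → E →L[ℝ] F} {p : E}

theorem fderiv_fderiv_sub_of_eqOn_tangent (hf : ContDiffAt ℝ 2 f p) (hG : ContDiffAt ℝ 2 G p)
    (hB : ContDiffAt ℝ 1 B p) (hf' : fderiv ℝ f p ≠ 0)
    (h : ∀ x, f x = f p → ∀ u, fderiv ℝ f x u = 0 → fderiv ℝ G x u = B x u) {n u v : E}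
    (hn : fderiv ℝ f p n = 1) (hu : fderiv ℝ f p u = 0) (hv : fderiv ℝ f p v = 0) :
    fderiv ℝ (fderiv ℝ G) p u v - fderiv ℝ B p u v
      = fderiv ℝ (fderiv ℝ f) p u v • (fderiv ℝ G p n - B p n) := by
  have hdf : ContDiffAt ℝ 1 (fderiv ℝ f) p := hf.fderiv_right (by norm_num)
  have hdG : ContDiffAt ℝ 1 (fderiv ℝ G) p := hG.fderiv_right (by norm_num)
  have hf₁ := (hf.of_le one_le_two).hasStrictFDerivAt one_ne_zero
  have hsf := hdf.hasStrictFDerivAt one_ne_zero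
  have hsD := (hdG.sub hB).hasStrictFDerivAt one_ne_zero
  -- `df x n • v - df x v • n` is tangent at every `x` and equals `v` at `p`.
  have hsw : HasStrictFDerivAt (fun x ↦ fderiv ℝ f x n • v - fderiv ℝ f x v • n) _ p :=
    ((hsf.clm_apply (hasStrictFDerivAt_const n p)).smul_const v).sub
      ((hsf.clm_apply (hasStrictFDerivAt_const v p)).smul_const n)
  have hzero : ∀ x, f x = f p →
      (fderiv ℝ G x - B x) (fderiv ℝ f x n • v - fderiv ℝ f x v • n) = 0 := fun x hx ↦ by
    rw [sub_apply, sub_eq_zero]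
    exact h x hx _ (by simp [mul_comm])
  have hderiv := apply_eq_zero_of_const_on_levelSet hf₁ hf' (hsD.clm_apply hsw)
    (fun x hx ↦ (hzero x hx).trans (hzero p rfl).symm) hu
  have hsub : fderiv ℝ (fun x ↦ fderiv ℝ G x - B x) p
      = fderiv ℝ (fderiv ℝ G) p - fderiv ℝ B p :=
    fderiv_fun_sub (hdG.differentiableAt one_ne_zero) (hB.differentiableAt one_ne_zero)
  simp only [hsub, hn, hv, h p rfl v hv, one_smul, zero_smul, sub_zero, add_apply,
    sub_apply, map_sub, map_smul, zero_apply, map_zero, zero_add,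
    ContinuousLinearMap.comp_apply, ContinuousLinearMap.flip_apply,
    ContinuousLinearMap.smulRight_apply, sub_self, zero_sub, smul_zero] at hderiv
  exact (neg_add_eq_zero.1 hderiv).symm

theorem fderiv_comm_of_eqOn_tangent (hf : ContDiffAt ℝ 2 f p) (hG : ContDiffAt ℝ 2 G p)
    (hB : ContDiffAt ℝ 1 B p) (hf' : fderiv ℝ f p ≠ 0)
    (h : ∀ x, f x = f p → ∀ u, fderiv ℝ f x u = 0 → fderiv ℝ G x u = B x u) {u v : E}
    (hu : fderiv ℝ f p u = 0) (hv : fderiv ℝ f p v = 0) :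
    fderiv ℝ B p u v = fderiv ℝ B p v u := by
  obtain ⟨n, hn⟩ := exists_apply_eq_one_of_ne_zero hf'
  have huv := fderiv_fderiv_sub_of_eqOn_tangent hf hG hB hf' h hn hu hv
  have hvu := fderiv_fderiv_sub_of_eqOn_tangent hf hG hB hf' h hn hv hu
  rw [(hf.isSymmSndFDerivAt (by simp)).eq u v] at huv
  rw [← (hG.isSymmSndFDerivAt (by simp)).eq u v, ← huv] at hvu
  exact (sub_right_injective hvu).symm

end Integrability

section UnitNormal

variable {E : Type*} [NormedAddCommGroup E] [InnerProductSpace ℝ E]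

/-- `ν` is a unit normal field of the hypersurface `{p | f p = 0}`. It is a field on all of `E`, but
only its behaviour near the hypersurface matters. The last field makes `0` a regular value. -/
structure IsUnitNormalField (f : E → ℝ) (ν : E → E) : Prop where
  contDiff : ContDiff ℝ 2 f
  contDiffAt : ∀ ⦃p⦄, f p = 0 → ContDiffAt ℝ 3 ν p
  norm_eq_one : ∀ ⦃p⦄, f p = 0 → ‖ν p‖ = 1
  fderiv_eq_zero_iff : ∀ ⦃p⦄, f p = 0 → ∀ u, fderiv ℝ f p u = 0 ↔ ⟪ν p, u⟫ = 0

/-- The vectors tangent to the hypersurface with normal field `ν` on which its shape operator,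
the differential of `ν`, is multiplication by `k`. -/
noncomputable def principalSpace (ν : E → E) (p : E) (k : ℝ) : Submodule ℝ E :=
  (ℝ ∙ ν p)ᗮ ⊓ Module.End.eigenspace (fderiv ℝ ν p : E →ₗ[ℝ] E) k

/-- The principal curvatures at `p` of the hypersurface with normal field `ν` are precisely `k₁` and
`k₂`, which may be equal: the shape operator is diagonalizable with these eigenvalues. -/
structure HasPrincipalCurvatures (ν : E → E) (p : E) (k₁ k₂ : ℝ) : Prop where
  left_ne_bot : principalSpace ν p k₁ ≠ ⊥
  right_ne_bot : principalSpace ν p k₂ ≠ ⊥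
  sup_eq : principalSpace ν p k₁ ⊔ principalSpace ν p k₂ = (ℝ ∙ ν p)ᗮ

/-- The orthogonal projection onto the tangent hyperplane, where `‖ν x‖ = 1`. -/
noncomputable def tangentProjection (ν : E → E) (x : E) : E →L[ℝ] E :=
  .id ℝ E - (innerSL ℝ (ν x)).smulRight (ν x)

/-- The projection onto the principal space of `k₁` along the one of `k₂` and the normal, written
as a polynomial in the shape operator so as to depend smoothly on `x`. -/
noncomputable def principalProjection (ν : E → E) (k₁ k₂ : ℝ) (x : E) : E →L[ℝ] E :=
  (k₁ - k₂)⁻¹ • (fderiv ℝ ν x - k₂ • .id ℝ E) ∘L tangentProjection ν x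

/-- On an isoparametric hypersurface, the tangential gradient of
`x ↦ ⟪principalProjection ν k₁ k₂ x a, b⟫`. -/
noncomputable def principalProjectionGradient (ν : E → E) (k₁ k₂ : ℝ) (a b : E) (x : E) : E :=
  -k₁ • (⟪ν x, a⟫ • principalProjection ν k₁ k₂ x b
    + ⟪ν x, b⟫ • principalProjection ν k₁ k₂ x a)

variable {ν : E → E} {p e w : E} {k k₁ k₂ : ℝ}

theorem mem_principalSpace {u : E} :
    u ∈ principalSpace ν p k ↔ ⟪ν p, u⟫ = 0 ∧ fderiv ℝ ν p u = k • u := by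
  simp [principalSpace, Submodule.mem_orthogonal_singleton_iff_inner_right]

theorem HasPrincipalCurvatures.symm (h : HasPrincipalCurvatures ν p k₁ k₂) :
    HasPrincipalCurvatures ν p k₂ k₁ :=
  ⟨h.right_ne_bot, h.left_ne_bot, (sup_comm _ _).trans h.sup_eq⟩

theorem tangentProjection_apply (u : E) :
    tangentProjection ν p u = u - ⟪ν p, u⟫ • ν p := by
  simp [tangentProjection]

theorem principalProjection_apply_of_inner_eq_zero {u : E} (hu : ⟪ν p, u⟫ = 0) :
    principalProjection ν k₁ k₂ p u = (k₁ - k₂)⁻¹ • (fderiv ℝ ν p u - k₂ • u) := by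
  simp [principalProjection, tangentProjection_apply, hu]

theorem principalProjection_apply_normal (hν : ‖ν p‖ = 1) :
    principalProjection ν k₁ k₂ p (ν p) = 0 := by
  simp [principalProjection, tangentProjection_apply, hν]

theorem principalProjection_apply_left (hk : k₁ ≠ k₂) (he : e ∈ principalSpace ν p k₁) :
    principalProjection ν k₁ k₂ p e = e := by
  obtain ⟨hνe, hAe⟩ := mem_principalSpace.1 he
  rw [principalProjection_apply_of_inner_eq_zero hνe, hAe, ← sub_smul,
    inv_smul_smul₀ (sub_ne_zero.2 hk)]

theorem principalProjection_apply_right (hw : w ∈ principalSpace ν p k₂) :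
    principalProjection ν k₁ k₂ p w = 0 := by
  obtain ⟨hνw, hAw⟩ := mem_principalSpace.1 hw
  rw [principalProjection_apply_of_inner_eq_zero hνw, hAw, sub_self, smul_zero]

theorem fderiv_normal_apply (hk : k₁ ≠ k₂) {u : E} (hu : ⟪ν p, u⟫ = 0) :
    fderiv ℝ ν p u = k₂ • u + (k₁ - k₂) • principalProjection ν k₁ k₂ p u := by
  rw [principalProjection_apply_of_inner_eq_zero hu, smul_inv_smul₀ (sub_ne_zero.2 hk)]
  abel

theorem HasPrincipalCurvatures.exists_eq_add (h : HasPrincipalCurvatures ν p k₁ k₂)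
    (hν : ‖ν p‖ = 1) (hk : k₁ ≠ k₂) (a : E) :
    principalProjection ν k₁ k₂ p a ∈ principalSpace ν p k₁ ∧
      ∃ w ∈ principalSpace ν p k₂, a = ⟪ν p, a⟫ • ν p + principalProjection ν k₁ k₂ p a + w := by
  have ha : a - ⟪ν p, a⟫ • ν p ∈ (ℝ ∙ ν p)ᗮ := by
    simp [Submodule.mem_orthogonal_singleton_iff_inner_right, inner_sub_right, inner_smul_right,
      hν]
  rw [← h.sup_eq, Submodule.mem_sup] at ha
  obtain ⟨e, he, w, hw, hew⟩ := ha
  rw [eq_sub_iff_add_eq'] at hew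
  have hQ : principalProjection ν k₁ k₂ p a = e := by
    conv_lhs => rw [← hew]
    simp only [map_add, map_smul, principalProjection_apply_normal hν, smul_zero,
      principalProjection_apply_left hk he, principalProjection_apply_right hw, zero_add, add_zero]
  refine ⟨hQ ▸ he, w, hw, ?_⟩
  rw [hQ, add_assoc, hew]

end UnitNormal

section UnitNormalCalculus

variable {E : Type*} [NormedAddCommGroup E] [InnerProductSpace ℝ E]
  {f : E → ℝ} {ν : E → E} {p u v : E} {k₁ k₂ : ℝ}

namespace IsUnitNormalField

theorem fderiv_ne_zero (h : IsUnitNormalField f ν) (hp : f p = 0) : fderiv ℝ f p ≠ 0 := by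
  intro hf'
  have hν := (h.fderiv_eq_zero_iff hp (ν p)).1 (by simp [hf'])
  simp [h.norm_eq_one hp] at hν

theorem hasFDerivAt (h : IsUnitNormalField f ν) (hp : f p = 0) :
    HasFDerivAt ν (fderiv ℝ ν p) p :=
  ((h.contDiffAt hp).differentiableAt (by norm_num)).hasFDerivAt

theorem contDiffAt_principalProjection (h : IsUnitNormalField f ν) (hp : f p = 0) (k₁ k₂ : ℝ) :
    ContDiffAt ℝ 2 (principalProjection ν k₁ k₂) p := by
  have hν : ContDiffAt ℝ 2 ν p := (h.contDiffAt hp).of_le (by norm_num)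
  have hdν : ContDiffAt ℝ 2 (fderiv ℝ ν) p := (h.contDiffAt hp).fderiv_right (by norm_num)
  have hP : ContDiffAt ℝ 2 (tangentProjection ν) p :=
    contDiffAt_const.sub (((innerSL ℝ).contDiff.contDiffAt.comp p hν).smulRight hν)
  exact ((hdν.sub contDiffAt_const).clm_comp hP).const_smul (k₁ - k₂)⁻¹

theorem hasFDerivAt_principalProjection (h : IsUnitNormalField f ν) (hp : f p = 0) (k₁ k₂ : ℝ) :
    HasFDerivAt (principalProjection ν k₁ k₂) (fderiv ℝ (principalProjection ν k₁ k₂) p) p :=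
  ((h.contDiffAt_principalProjection hp k₁ k₂).differentiableAt two_ne_zero).hasFDerivAt

theorem contDiffAt_principalProjectionGradient (h : IsUnitNormalField f ν) (hp : f p = 0)
    (k₁ k₂ : ℝ) (a b : E) : ContDiffAt ℝ 1 (principalProjectionGradient ν k₁ k₂ a b) p := by
  have hν : ContDiffAt ℝ 1 ν p := (h.contDiffAt hp).of_le (by norm_num)
  have hQ : ContDiffAt ℝ 1 (principalProjection ν k₁ k₂) p :=
    (h.contDiffAt_principalProjection hp k₁ k₂).of_le one_le_two
  have hterm (c d : E) : ContDiffAt ℝ 1 (fun x ↦ ⟪ν x, c⟫ • principalProjection ν k₁ k₂ x d) p :=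
    (hν.inner ℝ contDiffAt_const).smul (hQ.clm_apply contDiffAt_const)
  exact ((hterm a b).add (hterm b a)).const_smul (-k₁)

theorem fderiv_principalProjectionGradient (h : IsUnitNormalField f ν) (hp : f p = 0)
    {a b : E} (ha : ⟪ν p, a⟫ = 0) (hb : ⟪ν p, b⟫ = 0) :
    fderiv ℝ (principalProjectionGradient ν k₁ k₂ a b) p u
      = -k₁ • (⟪fderiv ℝ ν p u, a⟫ • principalProjection ν k₁ k₂ p b
        + ⟪fderiv ℝ ν p u, b⟫ • principalProjection ν k₁ k₂ p a) := by
  have hν := h.hasFDerivAt hp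
  have hQ := h.hasFDerivAt_principalProjection hp k₁ k₂
  have hterm (c d : E) : HasFDerivAt (fun x ↦ ⟪ν x, c⟫ • principalProjection ν k₁ k₂ x d) _ p :=
    (hν.inner ℝ (hasFDerivAt_const c p)).smul (hQ.clm_apply (hasFDerivAt_const d p))
  have hV : HasFDerivAt (principalProjectionGradient ν k₁ k₂ a b) _ p :=
    ((hterm a b).add (hterm b a)).const_smul (-k₁)
  rw [hV.fderiv]
  simp [ha, hb]

variable [CompleteSpace E]

theorem inner_fderiv_comm_of_tangent_gradient (h : IsUnitNormalField f ν) (hp : f p = 0)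
    {G : E → ℝ} {V : E → E} (hG : ContDiffAt ℝ 2 G p) (hV : ContDiffAt ℝ 1 V p)
    (hGV : ∀ x, f x = 0 → ∀ a, ⟪ν x, a⟫ = 0 → fderiv ℝ G x a = ⟪V x, a⟫)
    (hu : ⟪ν p, u⟫ = 0) (hv : ⟪ν p, v⟫ = 0) :
    ⟪fderiv ℝ V p u, v⟫ = ⟪u, fderiv ℝ V p v⟫ := by
  have hB : HasFDerivAt (innerSL ℝ ∘ V) ((innerSL ℝ).comp (fderiv ℝ V p)) p :=
    (innerSL ℝ).hasFDerivAt.comp p (hV.differentiableAt one_ne_zero).hasFDerivAt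
  have hcomm := fderiv_comm_of_eqOn_tangent h.contDiff.contDiffAt hG
    ((innerSL ℝ).contDiff.contDiffAt.comp p hV) (h.fderiv_ne_zero hp)
    (fun x hx a ha ↦ hGV x (hx.trans hp) a ((h.fderiv_eq_zero_iff (hx.trans hp) a).1 ha))
    ((h.fderiv_eq_zero_iff hp u).2 hu) ((h.fderiv_eq_zero_iff hp v).2 hv)
  rw [real_inner_comm _ u]
  simpa [hB.fderiv] using hcomm

theorem inner_fderiv_comm (h : IsUnitNormalField f ν) (hp : f p = 0) (hu : ⟪ν p, u⟫ = 0)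
    (hv : ⟪ν p, v⟫ = 0) : ⟪fderiv ℝ ν p u, v⟫ = ⟪u, fderiv ℝ ν p v⟫ :=
  h.inner_fderiv_comm_of_tangent_gradient hp h.contDiff.contDiffAt
    ((h.contDiffAt hp).of_le (by norm_num))
    (fun x hx a ha ↦ ((h.fderiv_eq_zero_iff hx a).2 ha).trans ha.symm) hu hv

theorem inner_eq_zero_of_mem_principalSpace (h : IsUnitNormalField f ν)
    (hk : k₁ ≠ k₂) (hp : f p = 0) {e w : E} (he : e ∈ principalSpace ν p k₁)
    (hw : w ∈ principalSpace ν p k₂) : ⟪e, w⟫ = 0 := by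
  obtain ⟨hνe, hAe⟩ := mem_principalSpace.1 he
  obtain ⟨hνw, hAw⟩ := mem_principalSpace.1 hw
  have hcomm := h.inner_fderiv_comm hp hνe hνw
  rw [hAe, hAw, real_inner_smul_left, real_inner_smul_right] at hcomm
  exact (mul_eq_mul_right_iff.1 hcomm).resolve_left hk

-- The projection extends the differential of `(k₁ - k₂)⁻¹ • (ν - k₂ • id)`: this is Codazzi.
theorem fderiv_principalProjection_comm (h : IsUnitNormalField f ν) (hp : f p = 0)
    (hu : ⟪ν p, u⟫ = 0) (hv : ⟪ν p, v⟫ = 0) :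
    fderiv ℝ (principalProjection ν k₁ k₂) p u v
      = fderiv ℝ (principalProjection ν k₁ k₂) p v u := by
  have hG : ∀ x, f x = 0 → HasFDerivAt (fun y ↦ (k₁ - k₂)⁻¹ • (ν y - k₂ • y))
      ((k₁ - k₂)⁻¹ • (fderiv ℝ ν x - k₂ • .id ℝ E)) x := fun x hx ↦
    ((h.hasFDerivAt hx).sub ((hasFDerivAt_id x).const_smul k₂)).const_smul _
  refine fderiv_comm_of_eqOn_tangent (G := fun y ↦ (k₁ - k₂)⁻¹ • (ν y - k₂ • y))
    h.contDiff.contDiffAt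
    ((((h.contDiffAt hp).of_le (by norm_num)).sub (contDiffAt_id.const_smul k₂)).const_smul _)
    ((h.contDiffAt_principalProjection hp k₁ k₂).of_le one_le_two) (h.fderiv_ne_zero hp)
    (fun x hx w hw ↦ ?_) ((h.fderiv_eq_zero_iff hp u).2 hu) ((h.fderiv_eq_zero_iff hp v).2 hv)
  have hx0 := hx.trans hp
  rw [principalProjection_apply_of_inner_eq_zero ((h.fderiv_eq_zero_iff hx0 w).1 hw),
    (hG x hx0).fderiv]
  rfl

theorem apply_eq_zero_of_const {F : Type*} [NormedAddCommGroup F] [NormedSpace ℝ F] {g : E → F}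
    {g' : E →L[ℝ] F} (h : IsUnitNormalField f ν) (hp : f p = 0) (hg : HasStrictFDerivAt g g' p)
    (hconst : ∀ x, f x = 0 → g x = g p) (hu : ⟪ν p, u⟫ = 0) : g' u = 0 :=
  apply_eq_zero_of_const_on_levelSet (h.contDiff.contDiffAt.hasStrictFDerivAt two_ne_zero)
    (h.fderiv_ne_zero hp) hg (fun x hx ↦ hconst x (hx.trans hp))
    ((h.fderiv_eq_zero_iff hp u).2 hu)

theorem eq_of_fderiv_eq_zero {F : Type*} [NormedAddCommGroup F] [NormedSpace ℝ F] {g : E → F}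
    (h : IsUnitNormalField f ν) (hconn : IsPreconnected (f ⁻¹' {0}))
    (hg : ∀ p, f p = 0 → DifferentiableAt ℝ g p)
    (hg' : ∀ p, f p = 0 → ∀ u, ⟪ν p, u⟫ = 0 → fderiv ℝ g p u = 0) {p q : E} (hp : f p = 0)
    (hq : f q = 0) : g p = g q := by
  refine eq_of_hasFDerivWithinAt_levelSet_zero (h.contDiff.of_le one_le_two)
    (fun x hx ↦ h.fderiv_ne_zero hx) hconn (fun x hx ↦ ?_) hp hq
  have hfx := (h.contDiff.differentiable two_ne_zero x).hasFDerivAt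
  exact hx ▸ hasFDerivWithinAt_levelSet_zero hfx (h.fderiv_ne_zero hx) (hg x hx).hasFDerivAt
    fun u hu ↦ hg' x hx u ((h.fderiv_eq_zero_iff hx u).1 hu)

end IsUnitNormalField

end UnitNormalCalculus

section Isoparametric

variable {E : Type*} [NormedAddCommGroup E] [InnerProductSpace ℝ E]
  {f : E → ℝ} {ν : E → E} {p u : E} {k₁ k₂ : ℝ}

/-- `{p | f p = 0}` is an isoparametric hypersurface with at most two principal curvatures: they
have the constant values `k₁` and `k₂` with respect to the unit normal field `ν`. -/
structure IsIsoparametric (f : E → ℝ) (ν : E → E) (k₁ k₂ : ℝ) : Prop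
    extends IsUnitNormalField f ν where
  hasPrincipalCurvatures : ∀ ⦃p⦄, f p = 0 → HasPrincipalCurvatures ν p k₁ k₂

namespace IsIsoparametric

theorem symm (h : IsIsoparametric f ν k₁ k₂) : IsIsoparametric f ν k₂ k₁ :=
  ⟨h.toIsUnitNormalField, fun _ hp ↦ (h.hasPrincipalCurvatures hp).symm⟩

theorem principalProjection_mem (h : IsIsoparametric f ν k₁ k₂) (hk : k₁ ≠ k₂) (hp : f p = 0)
    (a : E) : principalProjection ν k₁ k₂ p a ∈ principalSpace ν p k₁ :=
  ((h.hasPrincipalCurvatures hp).exists_eq_add (h.norm_eq_one hp) hk a).1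

theorem inner_normal_principalProjection (h : IsIsoparametric f ν k₁ k₂) (hk : k₁ ≠ k₂)
    (hp : f p = 0) (a : E) : ⟪ν p, principalProjection ν k₁ k₂ p a⟫ = 0 :=
  (mem_principalSpace.1 (h.principalProjection_mem hk hp a)).1

theorem principalProjection_idem (h : IsIsoparametric f ν k₁ k₂) (hk : k₁ ≠ k₂) (hp : f p = 0)
    (a : E) : principalProjection ν k₁ k₂ p (principalProjection ν k₁ k₂ p a)
      = principalProjection ν k₁ k₂ p a :=
  principalProjection_apply_left hk (h.principalProjection_mem hk hp a)

theorem principalProjection_fderiv_normal (h : IsIsoparametric f ν k₁ k₂) (hk : k₁ ≠ k₂)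
    (hp : f p = 0) (hu : ⟪ν p, u⟫ = 0) :
    principalProjection ν k₁ k₂ p (fderiv ℝ ν p u) = k₁ • principalProjection ν k₁ k₂ p u := by
  rw [fderiv_normal_apply hk hu, map_add, map_smul, map_smul, h.principalProjection_idem hk hp]
  module

variable [CompleteSpace E]

theorem inner_principalProjection (h : IsIsoparametric f ν k₁ k₂) (hk : k₁ ≠ k₂) (hp : f p = 0)
    (a b : E) : ⟪principalProjection ν k₁ k₂ p a, b⟫
      = ⟪principalProjection ν k₁ k₂ p a, principalProjection ν k₁ k₂ p b⟫ := by
  obtain ⟨-, w, hw, hb⟩ :=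
    (h.hasPrincipalCurvatures hp).exists_eq_add (h.norm_eq_one hp) hk b
  have hQw := h.inner_eq_zero_of_mem_principalSpace hk hp
    (h.principalProjection_mem hk hp a) hw
  have hQν := h.inner_normal_principalProjection hk hp a
  rw [real_inner_comm] at hQν
  conv_lhs => rw [hb]
  rw [inner_add_right, inner_add_right, real_inner_smul_right, hQν, hQw, mul_zero, zero_add,
    add_zero]

theorem inner_principalProjection_comm (h : IsIsoparametric f ν k₁ k₂) (hk : k₁ ≠ k₂)
    (hp : f p = 0) (a b : E) :
    ⟪principalProjection ν k₁ k₂ p a, b⟫ = ⟪a, principalProjection ν k₁ k₂ p b⟫ := by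
  rw [h.inner_principalProjection hk hp, real_inner_comm, ← h.inner_principalProjection hk hp,
    real_inner_comm]

theorem fderiv_principalProjection_normal (h : IsIsoparametric f ν k₁ k₂) (hk : k₁ ≠ k₂)
    (hp : f p = 0) (hu : ⟪ν p, u⟫ = 0) :
    fderiv ℝ (principalProjection ν k₁ k₂) p u (ν p)
      = -(k₁ • principalProjection ν k₁ k₂ p u) := by
  have hQ := (h.contDiffAt_principalProjection hp k₁ k₂).hasStrictFDerivAt two_ne_zero
  have hν := (h.contDiffAt hp).hasStrictFDerivAt three_ne_zero
  have hzero : ∀ x, f x = 0 → principalProjection ν k₁ k₂ x (ν x) = 0 := fun x hx ↦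
    principalProjection_apply_normal (h.norm_eq_one hx)
  have hderiv := h.apply_eq_zero_of_const hp (hQ.clm_apply hν)
    (fun x hx ↦ (hzero x hx).trans (hzero p hp).symm) hu
  rw [add_apply, ContinuousLinearMap.comp_apply, ContinuousLinearMap.flip_apply,
    h.principalProjection_fderiv_normal hk hp hu] at hderiv
  exact eq_neg_of_add_eq_zero_right hderiv

theorem inner_fderiv_principalProjection (h : IsIsoparametric f ν k₁ k₂) (hk : k₁ ≠ k₂)
    (hp : f p = 0) (hu : ⟪ν p, u⟫ = 0) (a b : E) :
    ⟪fderiv ℝ (principalProjection ν k₁ k₂) p u a, b⟫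
      = ⟪fderiv ℝ (principalProjection ν k₁ k₂) p u a, principalProjection ν k₁ k₂ p b⟫
        + ⟪principalProjection ν k₁ k₂ p a, fderiv ℝ (principalProjection ν k₁ k₂) p u b⟫ := by
  have hQ := (h.contDiffAt_principalProjection hp k₁ k₂).hasStrictFDerivAt two_ne_zero
  have hQa := hQ.clm_apply (hasStrictFDerivAt_const a p)
  have hQb := hQ.clm_apply (hasStrictFDerivAt_const b p)
  have hzero : ∀ x, f x = 0 → ⟪principalProjection ν k₁ k₂ x a, b⟫
      - ⟪principalProjection ν k₁ k₂ x a, principalProjection ν k₁ k₂ x b⟫ = 0 := fun x hx ↦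
    sub_eq_zero.2 (h.inner_principalProjection hk hx a b)
  have hderiv := h.apply_eq_zero_of_const hp
    ((hQa.inner ℝ (hasStrictFDerivAt_const b p)).sub (hQa.inner ℝ hQb))
    (fun x hx ↦ (hzero x hx).trans (hzero p hp).symm) hu
  simp only [sub_apply, ContinuousLinearMap.comp_apply, ContinuousLinearMap.prod_apply,
    add_apply, ContinuousLinearMap.flip_apply, zero_apply, map_zero, zero_add,
    fderivInnerCLM_apply, inner_zero_right] at hderiv
  linarith

theorem inner_fderiv_principalProjection_comm (h : IsIsoparametric f ν k₁ k₂) (hk : k₁ ≠ k₂)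
    (hp : f p = 0) (hu : ⟪ν p, u⟫ = 0) (a b : E) :
    ⟪fderiv ℝ (principalProjection ν k₁ k₂) p u a, b⟫
      = ⟪a, fderiv ℝ (principalProjection ν k₁ k₂) p u b⟫ := by
  have hab := h.inner_fderiv_principalProjection hk hp hu a b
  have hba := h.inner_fderiv_principalProjection hk hp hu b a
  rw [hab, real_inner_comm _ a, hba, add_comm]
  exact congrArg₂ _ (real_inner_comm _ _) (real_inner_comm _ _)

-- `⟪dQ u a, b⟫` is totally symmetric and splits as `⟪dQ u (Q a), b⟫ + ⟪dQ u a, Q b⟫`, likewise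
-- for every other pair of arguments, so that moving `Q` onto any one argument halves it.
theorem two_mul_inner_fderiv_principalProjection (h : IsIsoparametric f ν k₁ k₂) (hk : k₁ ≠ k₂)
    (hp : f p = 0) {a b : E} (hu : ⟪ν p, u⟫ = 0) (ha : ⟪ν p, a⟫ = 0) (hb : ⟪ν p, b⟫ = 0) :
    2 * ⟪fderiv ℝ (principalProjection ν k₁ k₂) p u a, principalProjection ν k₁ k₂ p b⟫
      = ⟪fderiv ℝ (principalProjection ν k₁ k₂) p u a, b⟫ := by
  set Q := principalProjection ν k₁ k₂
  have hQu : ⟪ν p, Q p u⟫ = 0 := h.inner_normal_principalProjection hk hp u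
  have codazzi {v w : E} (hv : ⟪ν p, v⟫ = 0) (hw : ⟪ν p, w⟫ = 0) :
      fderiv ℝ Q p v w = fderiv ℝ Q p w v := h.fderiv_principalProjection_comm hp hv hw
  have selfAdj {v : E} (hv : ⟪ν p, v⟫ = 0) (x y : E) :
      ⟪fderiv ℝ Q p v x, y⟫ = ⟪x, fderiv ℝ Q p v y⟫ :=
    h.inner_fderiv_principalProjection_comm hk hp hv x y
  have split {v : E} (hv : ⟪ν p, v⟫ = 0) (x y : E) :
      ⟪fderiv ℝ Q p v x, y⟫ = ⟪fderiv ℝ Q p v x, Q p y⟫ + ⟪fderiv ℝ Q p v (Q p x), y⟫ := by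
    rw [selfAdj hv (Q p x)]
    exact h.inner_fderiv_principalProjection hk hp hv x y
  have hua := split hu a b
  have hau := split ha u b
  rw [codazzi ha hu, codazzi ha hQu] at hau
  have hbu := split hb u a
  rw [codazzi hb hu, codazzi hb hQu, selfAdj hu, selfAdj hu, selfAdj hQu, real_inner_comm,
    real_inner_comm _ b, real_inner_comm _ b] at hbu
  linarith

theorem inner_fderiv_principalProjection_eq_zero (h : IsIsoparametric f ν k₁ k₂) (hk : k₁ ≠ k₂)
    (hp : f p = 0) {a b : E} (hu : ⟪ν p, u⟫ = 0) (ha : ⟪ν p, a⟫ = 0) (hb : ⟪ν p, b⟫ = 0) :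
    ⟪fderiv ℝ (principalProjection ν k₁ k₂) p u a, b⟫ = 0 := by
  have hQb := h.inner_normal_principalProjection hk hp b
  have htwo := h.two_mul_inner_fderiv_principalProjection hk hp hu ha hb
  have htwo' := h.two_mul_inner_fderiv_principalProjection hk hp hu ha hQb
  rw [h.principalProjection_idem hk hp] at htwo'
  linarith

theorem fderiv_principalProjection_apply (h : IsIsoparametric f ν k₁ k₂) (hk : k₁ ≠ k₂)
    (hp : f p = 0) (hu : ⟪ν p, u⟫ = 0) (a : E) :
    fderiv ℝ (principalProjection ν k₁ k₂) p u a
      = -k₁ • (⟪ν p, a⟫ • principalProjection ν k₁ k₂ p u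
        + ⟪principalProjection ν k₁ k₂ p u, a⟫ • ν p) := by
  set Q := principalProjection ν k₁ k₂
  have hTν : fderiv ℝ Q p u (ν p) = -(k₁ • Q p u) := h.fderiv_principalProjection_normal hk hp hu
  have hνQ : ⟪ν p, Q p u⟫ = 0 := h.inner_normal_principalProjection hk hp u
  have htangent (x : E) : ⟪ν p, x - ⟪ν p, x⟫ • ν p⟫ = 0 := by
    simp [inner_sub_right, inner_smul_right, h.norm_eq_one hp]
  have hTa : ⟪fderiv ℝ Q p u a, ν p⟫ = -(k₁ * ⟪Q p u, a⟫) := by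
    rw [h.inner_fderiv_principalProjection_comm hk hp hu, hTν, inner_neg_right,
      real_inner_smul_right, real_inner_comm]
  refine ext_inner_right ℝ fun b ↦ ?_
  have hzero := h.inner_fderiv_principalProjection_eq_zero hk hp hu (htangent a) (htangent b)
  change ⟪fderiv ℝ Q p u _, _⟫ = 0 at hzero
  simp only [map_sub, map_smul, inner_sub_left, inner_sub_right, real_inner_smul_left,
    real_inner_smul_right, inner_neg_left, hTν, hTa, real_inner_comm (ν p) (Q p u), hνQ] at hzero
  simp only [real_inner_smul_left, inner_add_left]
  linarith

theorem fderiv_inner_principalProjection (h : IsIsoparametric f ν k₁ k₂) (hk : k₁ ≠ k₂)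
    (hp : f p = 0) (hu : ⟪ν p, u⟫ = 0) (a b : E) :
    fderiv ℝ (fun x ↦ ⟪principalProjection ν k₁ k₂ x a, b⟫) p u
      = ⟪principalProjectionGradient ν k₁ k₂ a b p, u⟫ := by
  have hQa := (h.hasFDerivAt_principalProjection hp k₁ k₂).clm_apply (hasFDerivAt_const a p)
  simp only [(hQa.inner ℝ (hasFDerivAt_const b p)).fderiv, principalProjectionGradient,
    ContinuousLinearMap.comp_apply, ContinuousLinearMap.prod_apply, add_apply,
    ContinuousLinearMap.flip_apply, zero_apply, map_zero, zero_add, fderivInnerCLM_apply,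
    inner_zero_right, h.fderiv_principalProjection_apply hk hp hu, real_inner_smul_left,
    inner_add_left, h.inner_principalProjection_comm hk hp _ u, real_inner_comm _ a,
    real_inner_comm _ b]
  ring

theorem mul_curvatures_eq_zero (h : IsIsoparametric f ν k₁ k₂) (hk : k₁ ≠ k₂) (hp : f p = 0) :
    k₁ * k₂ = 0 := by
  obtain ⟨e, he, he0⟩ := (Submodule.ne_bot_iff _).1 (h.hasPrincipalCurvatures hp).left_ne_bot
  obtain ⟨w, hw, hw0⟩ := (Submodule.ne_bot_iff _).1 (h.hasPrincipalCurvatures hp).right_ne_bot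
  obtain ⟨hνe, hAe⟩ := mem_principalSpace.1 he
  obtain ⟨hνw, hAw⟩ := mem_principalSpace.1 hw
  have hew : ⟪e, w⟫ = 0 := h.inner_eq_zero_of_mem_principalSpace hk hp he hw
  have hgauss := h.inner_fderiv_comm_of_tangent_gradient hp
    (((h.contDiffAt_principalProjection hp k₁ k₂).clm_apply contDiffAt_const).inner ℝ
      contDiffAt_const)
    (h.contDiffAt_principalProjectionGradient hp k₁ k₂ e w)
    (fun x hx a ha ↦ h.fderiv_inner_principalProjection hk hx ha e w) hνw hνe
  simpa [h.fderiv_principalProjectionGradient hp hνe hνw, hAw, hAe,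
    principalProjection_apply_left hk he, principalProjection_apply_right hw, inner_smul_left,
    inner_smul_right, real_inner_comm e w, hew, he0, hw0] using hgauss

theorem fderiv_principalProjection_eq_zero (h : IsIsoparametric f ν 0 k₂) (hk : 0 ≠ k₂)
    (hp : f p = 0) (hu : ⟪ν p, u⟫ = 0) : fderiv ℝ (principalProjection ν 0 k₂) p u = 0 := by
  ext a
  simp [h.fderiv_principalProjection_apply hk hp hu]

end IsIsoparametric

end Isoparametric

section Tube

variable {E : Type*} [NormedAddCommGroup E] [InnerProductSpace ℝ E]

theorem one_lt_rank_of_inner_eq_zero {K : Submodule ℝ E} {v w : E} (hv : v ∈ K) (hw : w ∈ K)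
    (hv0 : v ≠ 0) (hw0 : w ≠ 0) (hvw : ⟪v, w⟫ = 0) : 1 < Module.rank ℝ K := by
  have hindep : LinearIndependent ℝ ![(⟨v, hv⟩ : K), ⟨w, hw⟩] := by
    refine linearIndependent_of_ne_zero_of_inner_eq_zero (by simp [Fin.forall_fin_two, hv0, hw0])
      fun i j hij ↦ ?_
    fin_cases i <;> fin_cases j <;> simp_all [real_inner_comm]
  exact Cardinal.one_lt_two.trans_le (by simpa using hindep.cardinal_lift_le_rank)

variable (K : Submodule ℝ E) [K.HasOrthogonalProjection] (a : E)

theorem infDist_mk'_eq_norm_starProjection (x : E) :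
    Metric.infDist x (AffineSubspace.mk' a K : Set E) = ‖Kᗮ.starProjection (x - a)‖ := by
  have ha : a ∈ AffineSubspace.mk' a K := AffineSubspace.self_mem_mk' a K
  refine le_antisymm ?_ ((Metric.le_infDist ⟨a, ha⟩).2 fun y hy ↦ ?_)
  · have hfoot : a + K.starProjection (x - a) ∈ AffineSubspace.mk' a K := by
      simpa only [AffineSubspace.mem_mk', vsub_eq_sub, add_sub_cancel_left] using
        K.starProjection_apply_mem (x - a)
    refine (Metric.infDist_le_dist_of_mem hfoot).trans_eq ?_
    rw [dist_eq_norm, Submodule.starProjection_orthogonal_val, sub_add_eq_sub_sub]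
  · have hya : Kᗮ.starProjection (y - a) = 0 :=
      Submodule.starProjection_orthogonal_apply_eq_zero (AffineSubspace.mem_mk'.1 hy)
    rw [← sub_add_sub_cancel x y a, map_add, hya, add_zero, dist_eq_norm]
    exact Kᗮ.norm_starProjection_apply_le _

theorem isPreconnected_norm_starProjection_eq (hK : 1 < Module.rank ℝ Kᗮ) (r : ℝ) :
    IsPreconnected {x | ‖Kᗮ.starProjection (x - a)‖ = r} := by
  have himage : {x | ‖Kᗮ.starProjection (x - a)‖ = r}
      = (fun y : Kᗮ × E ↦ a + y.1 + K.starProjection y.2) '' Metric.sphere 0 r ×ˢ Set.univ := by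
    refine Set.Subset.antisymm (fun x hx ↦ ?_) ?_
    · refine ⟨(Kᗮ.orthogonalProjectionOnto (x - a), x - a),
        ⟨mem_sphere_zero_iff_norm.2 hx, trivial⟩, ?_⟩
      change a + Kᗮ.starProjection (x - a) + K.starProjection (x - a) = x
      rw [add_assoc, add_comm (Kᗮ.starProjection _),
        Submodule.starProjection_add_starProjection_orthogonal, add_sub_cancel]
    · rintro _ ⟨⟨w, y⟩, ⟨hw, -⟩, rfl⟩
      have hKy : Kᗮ.starProjection (K.starProjection y) = 0 :=
        Submodule.starProjection_orthogonal_apply_eq_zero (K.starProjection_apply_mem y)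
      change ‖Kᗮ.starProjection (a + w + K.starProjection y - a)‖ = r
      rw [add_assoc, add_sub_cancel_left, map_add, hKy, add_zero,
        Submodule.starProjection_eq_self_iff.2 w.2]
      exact mem_sphere_zero_iff_norm.1 hw
  rw [himage]
  exact ((isPreconnected_sphere hK 0 r).prod isPreconnected_univ).image _ (by fun_prop)

theorem hasFDerivAt_norm_starProjection_sq (x : E) :
    HasFDerivAt (fun x ↦ ‖K.starProjection (x - a)‖ ^ 2)
      (2 • (innerSL ℝ (K.starProjection (x - a))).comp K.starProjection) x := by
  simpa using! (K.starProjection.hasFDerivAt.comp x (hasFDerivAt_sub_const a)).norm_sq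

theorem fderiv_norm_starProjection_sq_ne_zero {x : E} (hx : K.starProjection (x - a) ≠ 0) :
    fderiv ℝ (fun x ↦ ‖K.starProjection (x - a)‖ ^ 2) x ≠ 0 := by
  rw [(hasFDerivAt_norm_starProjection_sq K a x).fderiv]
  intro h
  have hself : 2 • ⟪K.starProjection (x - a), K.starProjection (x - a)⟫ = (0 : ℝ) :=
    congr($h (x - a))
  rw [smul_eq_zero_iff_right two_ne_zero, inner_self_eq_zero] at hself
  exact hx hself

end Tube

section Classification

variable {E : Type*} [NormedAddCommGroup E] [InnerProductSpace ℝ E] [CompleteSpace E]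
  {f : E → ℝ} {ν : E → E}

namespace IsUnitNormalField

theorem exists_levelSet_eq_hyperplane (h : IsUnitNormalField f ν) (hconn : IsConnected (f ⁻¹' {0}))
    (hdν : ∀ p, f p = 0 → ∀ u, ⟪ν p, u⟫ = 0 → fderiv ℝ ν p u = 0) :
    ∃ a n : E, ‖n‖ = 1 ∧ f ⁻¹' {0} = {p | ⟪p - a, n⟫ = 0} := by
  obtain ⟨a, ha⟩ := hconn.nonempty
  have hν : ∀ p, f p = 0 → ν p = ν a := fun p hp ↦ h.eq_of_fderiv_eq_zero hconn.isPreconnected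
    (fun q hq ↦ (h.hasFDerivAt hq).differentiableAt) hdν hp ha
  have hg (x : E) : fderiv ℝ (innerSL ℝ (ν a)) x = innerSL ℝ (ν a) :=
    (innerSL ℝ (ν a)).fderiv
  have hsub : f ⁻¹' {0} ⊆ innerSL ℝ (ν a) ⁻¹' {⟪ν a, a⟫} := fun p hp ↦
    h.eq_of_fderiv_eq_zero hconn.isPreconnected
      (fun q _ ↦ (innerSL ℝ (ν a)).differentiableAt)
      (fun q hq u hu ↦ by rwa [hg, ← hν q hq]) hp ha
  have hg' : innerSL ℝ (ν a) ≠ 0 := fun h0 ↦ by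
    simpa [h.norm_eq_one ha] using congr($h0 (ν a))
  have hhyperplane : {p | ⟪p - a, ν a⟫ = 0} = innerSL ℝ (ν a) ⁻¹' {⟪ν a, a⟫} := by
    ext p
    change ⟪p - a, ν a⟫ = 0 ↔ ⟪ν a, p⟫ = ⟪ν a, a⟫
    rw [real_inner_comm, inner_sub_right, sub_eq_zero]
  refine ⟨a, ν a, h.norm_eq_one ha, hhyperplane ▸ ?_⟩
  exact levelSet_eq_of_subset (h.contDiff.of_le one_le_two) (innerSL ℝ (ν a)).contDiff
    (fun p hp ↦ h.fderiv_ne_zero hp) (fun p _ ↦ (hg p).trans_ne hg') hconn.nonempty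
    (convex_hyperplane (innerSL ℝ (ν a)).toLinearMap.isLinear _).isPreconnected hsub

variable {K : Submodule ℝ E} [K.HasOrthogonalProjection] {k : ℝ}

theorem exists_starProjection_sub_eq (h : IsUnitNormalField f ν) (hconn : IsConnected (f ⁻¹' {0}))
    (hk : k ≠ 0) (hνK : ∀ p, f p = 0 → ν p ∈ Kᗮ)
    (hdν : ∀ p, f p = 0 → ∀ u, ⟪ν p, u⟫ = 0 → fderiv ℝ ν p u = k • Kᗮ.starProjection u) :
    ∃ a, ∀ p, f p = 0 → Kᗮ.starProjection (p - a) = k⁻¹ • ν p := by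
  have hcenter : ∀ p, f p = 0 → HasFDerivAt (fun x ↦ Kᗮ.starProjection x - k⁻¹ • ν x)
      (Kᗮ.starProjection - k⁻¹ • fderiv ℝ ν p) p := fun p hp ↦
    Kᗮ.starProjection.hasFDerivAt.sub ((h.hasFDerivAt hp).const_smul _)
  obtain ⟨q, hq⟩ := hconn.nonempty
  refine ⟨Kᗮ.starProjection q - k⁻¹ • ν q, fun p hp ↦ ?_⟩
  have hpq := h.eq_of_fderiv_eq_zero hconn.isPreconnected
    (fun y hy ↦ (hcenter y hy).differentiableAt)
    (fun y hy u hu ↦ by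
      rw [(hcenter y hy).fderiv, sub_apply, smul_apply, hdν y hy u hu,
        inv_smul_smul₀ hk, sub_self]) hp hq
  have hmem : Kᗮ.starProjection q - k⁻¹ • ν q ∈ Kᗮ :=
    sub_mem (Kᗮ.starProjection_apply_mem q) (Kᗮ.smul_mem _ (hνK q hq))
  rw [map_sub, Submodule.starProjection_eq_self_iff.2 hmem, ← hpq, sub_sub_cancel]

theorem exists_levelSet_eq_tube (h : IsUnitNormalField f ν) (hconn : IsConnected (f ⁻¹' {0}))
    (hK : 1 < Module.rank ℝ Kᗮ) (hk : k ≠ 0) (hνK : ∀ p, f p = 0 → ν p ∈ Kᗮ)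
    (hdν : ∀ p, f p = 0 → ∀ u, ⟪ν p, u⟫ = 0 → fderiv ℝ ν p u = k • Kᗮ.starProjection u) :
    ∃ (a : E) (r : ℝ), 0 < r ∧ f ⁻¹' {0} = {x | Metric.infDist x (AffineSubspace.mk' a K) = r} := by
  obtain ⟨a, ha⟩ := h.exists_starProjection_sub_eq hconn hk hνK hdν
  have hnorm : ∀ p, f p = 0 → ‖Kᗮ.starProjection (p - a)‖ = |k|⁻¹ := fun p hp ↦ by
    rw [ha p hp, norm_smul, h.norm_eq_one hp, mul_one, norm_inv, Real.norm_eq_abs]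
  have hsq : (fun x ↦ ‖Kᗮ.starProjection (x - a)‖ ^ 2) ⁻¹' {|k|⁻¹ ^ 2}
      = {x | ‖Kᗮ.starProjection (x - a)‖ = |k|⁻¹} := by
    ext x
    exact sq_eq_sq₀ (norm_nonneg _) (by positivity)
  refine ⟨a, |k|⁻¹, by positivity, ?_⟩
  simp_rw [infDist_mk'_eq_norm_starProjection, ← hsq]
  refine levelSet_eq_of_subset (h.contDiff.of_le one_le_two)
    ((Kᗮ.starProjection.contDiff.comp (contDiff_id.sub contDiff_const)).norm_sq ℝ)
    (fun p hp ↦ h.fderiv_ne_zero hp) (fun p hp ↦ ?_) hconn.nonempty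
    (hsq ▸ isPreconnected_norm_starProjection_eq K a hK _) (hsq ▸ hnorm)
  refine fderiv_norm_starProjection_sq_ne_zero Kᗮ a (norm_ne_zero_iff.1 ?_)
  rw [hnorm p hp]
  positivity

end IsUnitNormalField

end Classification

section IsoparametricClassification

variable {E : Type*} [NormedAddCommGroup E] [InnerProductSpace ℝ E] {f : E → ℝ} {ν : E → E}
  {p : E} {k k₁ k₂ : ℝ}

namespace IsIsoparametric

theorem fderiv_normal_of_umbilic (h : IsIsoparametric f ν k k) (hp : f p = 0) {u : E}
    (hu : ⟪ν p, u⟫ = 0) : fderiv ℝ ν p u = k • u := by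
  have hmem : u ∈ principalSpace ν p k ⊔ principalSpace ν p k := by
    rw [(h.hasPrincipalCurvatures hp).sup_eq]
    exact Submodule.mem_orthogonal_singleton_iff_inner_right.2 hu
  rw [sup_idem] at hmem
  exact (mem_principalSpace.1 hmem).2

theorem one_lt_rank_orthogonal (h : IsIsoparametric f ν k₁ k₂) (hp : f p = 0) {K : Submodule ℝ E}
    (hν : ν p ∈ Kᗮ) (hK : principalSpace ν p k₂ ≤ Kᗮ) : 1 < Module.rank ℝ Kᗮ := by
  obtain ⟨w, hw, hw0⟩ := (Submodule.ne_bot_iff _).1 (h.hasPrincipalCurvatures hp).right_ne_bot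
  exact one_lt_rank_of_inner_eq_zero hν (hK hw) (norm_ne_zero_iff.1 (by simp [h.norm_eq_one hp]))
    hw0 (mem_principalSpace.1 hw).1

variable [CompleteSpace E]

theorem exists_starProjection_eq_principalProjection (h : IsIsoparametric f ν 0 k) (hk : 0 ≠ k)
    (hconn : IsConnected (f ⁻¹' {0})) :
    ∃ (K : Submodule ℝ E) (_ : K.HasOrthogonalProjection),
      ∀ p, f p = 0 → principalProjection ν 0 k p = K.starProjection := by
  obtain ⟨q, hq⟩ := hconn.nonempty
  have hsymm : (principalProjection ν 0 k q : E →ₗ[ℝ] E).IsSymmetricProjection :=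
    ⟨LinearMap.ext (h.principalProjection_idem hk hq), h.inner_principalProjection_comm hk hq⟩
  obtain ⟨K, hKproj, hK⟩ := LinearMap.isSymmetricProjection_iff_eq_coe_starProjection.1 hsymm
  refine ⟨K, hKproj, fun p hp ↦ ?_⟩
  rw [← ContinuousLinearMap.coe_injective hK]
  exact h.eq_of_fderiv_eq_zero hconn.isPreconnected
    (fun x hx ↦ (h.hasFDerivAt_principalProjection hx 0 k).differentiableAt)
    (fun x hx u hu ↦ h.fderiv_principalProjection_eq_zero hk hx hu) hp hq

theorem exists_levelSet_eq_tube_of_ne (h : IsIsoparametric f ν 0 k) (hk : 0 ≠ k)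
    (hconn : IsConnected (f ⁻¹' {0})) :
    ∃ (K : Submodule ℝ E) (a : E) (r : ℝ), 1 < Module.rank ℝ Kᗮ ∧ 0 < r ∧
      f ⁻¹' {0} = {x | Metric.infDist x (AffineSubspace.mk' a K) = r} := by
  obtain ⟨K, _, hK⟩ := h.exists_starProjection_eq_principalProjection hk hconn
  have hνK : ∀ p, f p = 0 → ν p ∈ Kᗮ := fun p hp ↦ by
    rw [← K.starProjection_apply_eq_zero_iff, ← hK p hp,
      principalProjection_apply_normal (h.norm_eq_one hp)]
  obtain ⟨q, hq⟩ := hconn.nonempty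
  have hrank : 1 < Module.rank ℝ Kᗮ := h.one_lt_rank_orthogonal hq (hνK q hq) fun w hw ↦ by
    rw [← K.starProjection_apply_eq_zero_iff, ← hK q hq, principalProjection_apply_right hw]
  obtain ⟨a, r, hr, htube⟩ := h.exists_levelSet_eq_tube hconn hrank hk.symm hνK
    fun p hp u hu ↦ by
      rw [fderiv_normal_apply hk hu, hK p hp, Submodule.starProjection_orthogonal_val]
      module
  exact ⟨K, a, r, hrank, hr, htube⟩

theorem levelSet_eq_hyperplane_or_tube (h : IsIsoparametric f ν k₁ k₂)
    (hconn : IsConnected (f ⁻¹' {0})) :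
    (∃ a n : E, ‖n‖ = 1 ∧ f ⁻¹' {0} = {p | ⟪p - a, n⟫ = 0}) ∨
      ∃ (K : Submodule ℝ E) (a : E) (r : ℝ), 1 < Module.rank ℝ Kᗮ ∧ 0 < r ∧
        f ⁻¹' {0} = {x | Metric.infDist x (AffineSubspace.mk' a K) = r} := by
  obtain ⟨q, hq⟩ := hconn.nonempty
  obtain rfl | hk := eq_or_ne k₁ k₂
  · obtain rfl | hk₁ := eq_or_ne k₁ 0
    · exact .inl (h.exists_levelSet_eq_hyperplane hconn fun p hp u hu ↦ by
        rw [h.fderiv_normal_of_umbilic hp hu, zero_smul])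
    · have hrank := h.one_lt_rank_orthogonal (K := ⊥) hq (by simp) (by simp)
      obtain ⟨a, r, hr, htube⟩ := h.exists_levelSet_eq_tube hconn hrank hk₁ (by simp)
        fun p hp u hu ↦ by
          rw [h.fderiv_normal_of_umbilic hp hu,
            Submodule.starProjection_eq_self_iff.2 (by simp : u ∈ (⊥ : Submodule ℝ E)ᗮ)]
      exact .inr ⟨⊥, a, r, hrank, hr, htube⟩
  · obtain rfl | rfl := mul_eq_zero.1 (h.mul_curvatures_eq_zero hk hq)
    · exact .inr (h.exists_levelSet_eq_tube_of_ne hk hconn)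
    · exact .inr (h.symm.exists_levelSet_eq_tube_of_ne hk.symm hconn)

end IsIsoparametric

end IsoparametricClassification

section Gradient

variable {E : Type*} [NormedAddCommGroup E] [InnerProductSpace ℝ E] [CompleteSpace E] {f : E → ℝ}
  {ν : E → E}

theorem isUnitNormalField_of_gradient (hf : ContDiff ℝ 4 f)
    (hreg : ∀ p, f p = 0 → gradient f p ≠ 0) (hν : ∀ p, ν p = ‖gradient f p‖⁻¹ • gradient f p) :
    IsUnitNormalField f ν where
  contDiff := hf.of_le (by norm_num)
  contDiffAt p hp := by
    have hgrad : ContDiff ℝ 3 (gradient f) :=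
      (InnerProductSpace.toDual ℝ E).symm.toContinuousLinearEquiv.contDiff.comp
        (hf.fderiv_right (by norm_num))
    rw [funext hν]
    exact ((hgrad.contDiffAt.norm ℝ (hreg p hp)).inv (norm_ne_zero_iff.2 (hreg p hp))).smul
      hgrad.contDiffAt
  norm_eq_one p hp := (hν p).symm ▸ norm_smul_inv_norm (𝕜 := ℝ) (hreg p hp)
  fderiv_eq_zero_iff p hp u := by
    rw [hν, real_inner_smul_left, inner_gradient_left]
    simp [hreg p hp]

theorem stmt_16_general {M : Set E} {k₁ k₂ : ℝ} (hf : ContDiff ℝ 4 f) (hM : M = f ⁻¹' {0})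
    (hconn : IsConnected M) (hreg : ∀ p ∈ M, gradient f p ≠ 0)
    (hν : ∀ p, ν p = ‖gradient f p‖⁻¹ • gradient f p)
    (hcurv : ∀ p ∈ M, HasPrincipalCurvatures ν p k₁ k₂) :
    (∃ a n : E, ‖n‖ = 1 ∧ M = {p | ⟪p - a, n⟫ = 0}) ∨
      ∃ (K : Submodule ℝ E) (a : E) (r : ℝ), 1 < Module.rank ℝ Kᗮ ∧ 0 < r ∧
        M = {x | Metric.infDist x (AffineSubspace.mk' a K) = r} := by
  subst hM
  exact IsIsoparametric.levelSet_eq_hyperplane_or_tube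
    ⟨isUnitNormalField_of_gradient hf hreg hν, hcurv⟩ hconn

end Gradient

section DimensionThree

theorem eq_bot_or_eq_span_unit_of_finrank_le_one {E : Type*} [NormedAddCommGroup E]
    [NormedSpace ℝ E] {K : Submodule ℝ E} [FiniteDimensional ℝ K]
    (hK : Module.finrank ℝ K ≤ 1) : K = ⊥ ∨ ∃ d : E, ‖d‖ = 1 ∧ K = ℝ ∙ d := by
  obtain ⟨v, rfl⟩ := (Submodule.finrank_le_one_iff_isPrincipal K).1 hK
  obtain rfl | hv := eq_or_ne v 0
  · exact .inl (Submodule.span_zero_singleton ℝ)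
  · refine .inr ⟨‖v‖⁻¹ • v, norm_smul_inv_norm (𝕜 := ℝ) hv, ?_⟩
    rw [Submodule.span_singleton_smul_eq (inv_ne_zero (norm_ne_zero_iff.2 hv)).isUnit]

variable {E : Type*} [NormedAddCommGroup E] [InnerProductSpace ℝ E]
  [Fact (Module.finrank ℝ E = 2 + 1)]

theorem hasPrincipalCurvatures_of_orthogonal {ν : E → E} {p e₁ e₂ : E} {k₁ k₂ : ℝ}
    (hν : ν p ≠ 0) (he₁ : e₁ ≠ 0) (he₂ : e₂ ≠ 0) (he : ⟪e₁, e₂⟫ = 0)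
    (h₁ : e₁ ∈ principalSpace ν p k₁) (h₂ : e₂ ∈ principalSpace ν p k₂) :
    HasPrincipalCurvatures ν p k₁ k₂ := by
  refine ⟨(Submodule.ne_bot_iff _).2 ⟨e₁, h₁, he₁⟩, (Submodule.ne_bot_iff _).2 ⟨e₂, h₂, he₂⟩, ?_⟩
  have : FiniteDimensional ℝ E := .of_fact_finrank_eq_succ 2
  refine Submodule.eq_of_le_of_finrank_le (sup_le inf_le_left inf_le_left) ?_
  rw [Submodule.finrank_orthogonal_span_singleton (n := 2) hν]
  have hrank := one_lt_rank_of_inner_eq_zero (Submodule.mem_sup_left h₁)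
    (Submodule.mem_sup_right h₂) he₁ he₂ he
  rw [← Module.finrank_eq_rank] at hrank
  exact_mod_cast hrank

theorem sphere_or_cylinder_of_one_lt_rank_orthogonal {K : Submodule ℝ E}
    (hK : 1 < Module.rank ℝ Kᗮ) (a : E) (r : ℝ) :
    {x | Metric.infDist x (AffineSubspace.mk' a K) = r} = Metric.sphere a r ∨
      ∃ d : E, ‖d‖ = 1 ∧ {x | Metric.infDist x (AffineSubspace.mk' a K) = r}
        = {x | Metric.infDist x {y | ∃ t : ℝ, y = a + t • d} = r} := by
  have : FiniteDimensional ℝ E := .of_fact_finrank_eq_succ 2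
  have hle : Module.finrank ℝ K ≤ 1 := by
    have hsum := K.finrank_add_finrank_orthogonal
    rw [← Module.finrank_eq_rank, ← Nat.cast_one, Nat.cast_lt] at hK
    rw [(Fact.out : Module.finrank ℝ E = 2 + 1)] at hsum
    omega
  obtain rfl | ⟨d, hd, rfl⟩ := eq_bot_or_eq_span_unit_of_finrank_le_one hle
  · left
    have hmk : (AffineSubspace.mk' a (⊥ : Submodule ℝ E) : Set E) = {a} := by
      ext y
      simp [AffineSubspace.mem_mk', sub_eq_zero]
    simp_rw [hmk, Metric.infDist_singleton]
    rfl
  · refine .inr ⟨d, hd, ?_⟩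
    congr! with x
    ext y
    simp [AffineSubspace.mem_mk', Submodule.mem_span_singleton, eq_sub_iff_add_eq', eq_comm]

end DimensionThree

/-- Segre's theorem in ℝ³: a connected complete isoparametric surface
(realized as a regular level set `M = f⁻¹(0)` with unit normal `ν = ∇f/|∇f|`,
whose principal curvatures — the eigenvalues of the Weingarten map `dν` on an
orthonormal pair of tangent eigenvectors — are constants `k₁, k₂` on `M`) is
a plane, a round sphere, or a round circular cylinder. -/
theorem stmt_16 (f : EuclideanSpace ℝ (Fin 3) → ℝ) (hf : ContDiff ℝ (⊤ : ℕ∞) f)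
    (M : Set (EuclideanSpace ℝ (Fin 3))) (hM : M = f ⁻¹' {0})
    (hne : M.Nonempty) (hconn : IsConnected M)
    (hreg : ∀ p ∈ M, gradient f p ≠ 0)
    (ν : EuclideanSpace ℝ (Fin 3) → EuclideanSpace ℝ (Fin 3))
    (hν : ∀ p, ν p = ‖gradient f p‖⁻¹ • gradient f p)
    (k₁ k₂ : ℝ)
    (hcurv : ∀ p ∈ M, ∃ e₁ e₂ : EuclideanSpace ℝ (Fin 3),
      ‖e₁‖ = 1 ∧ ‖e₂‖ = 1 ∧ ⟪e₁, e₂⟫ = 0 ∧ ⟪e₁, ν p⟫ = 0 ∧ ⟪e₂, ν p⟫ = 0 ∧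
      fderiv ℝ ν p e₁ = k₁ • e₁ ∧ fderiv ℝ ν p e₂ = k₂ • e₂) :
    (∃ (a n : EuclideanSpace ℝ (Fin 3)), ‖n‖ = 1 ∧
        M = {p | ⟪p - a, n⟫ = 0})
    ∨ (∃ (c : EuclideanSpace ℝ (Fin 3)) (r : ℝ), 0 < r ∧
        M = Metric.sphere c r)
    ∨ (∃ (a d : EuclideanSpace ℝ (Fin 3)) (r : ℝ), 0 < r ∧ ‖d‖ = 1 ∧
        M = {p | Metric.infDist p {x | ∃ t : ℝ, x = a + t • d} = r}) := by
  have : Fact (Module.finrank ℝ (EuclideanSpace ℝ (Fin 3)) = 2 + 1) := ⟨by simp⟩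
  have hprincipal : ∀ p ∈ M, HasPrincipalCurvatures ν p k₁ k₂ := fun p hp ↦ by
    obtain ⟨e₁, e₂, he₁, he₂, he, hν₁, hν₂, h₁, h₂⟩ := hcurv p hp
    exact hasPrincipalCurvatures_of_orthogonal (by simp [hν, hreg p hp])
      (norm_ne_zero_iff.1 (by simp [he₁])) (norm_ne_zero_iff.1 (by simp [he₂])) he
      (mem_principalSpace.2 ⟨by rwa [real_inner_comm], h₁⟩)
      (mem_principalSpace.2 ⟨by rwa [real_inner_comm], h₂⟩)
  obtain hplane | ⟨K, a, r, hK, hr, htube⟩ :=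
    stmt_16_general (contDiff_infty.1 hf 4) hM hconn hreg hν hprincipal
  · exact .inl hplane
  · obtain hsphere | ⟨d, hd, hcylinder⟩ := sphere_or_cylinder_of_one_lt_rank_orthogonal hK a r
    · exact .inr (.inl ⟨a, r, hr, htube.trans hsphere⟩)
    · exact .inr (.inr ⟨a, d, r, hr, hd, htube.trans hcylinder⟩)
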